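/- There is no invertible element F ∈ Q⊗Q with (ε⊗id)(F) = 1 = (id⊗ε)(F) such that F·Δ(a)·F^{-1} = Δ(a) for all a ∈ Q and Φ = (F⊗1)·(Δ⊗id)(F)·((id⊗Δ)(F))^{-1}·(1⊗F)^{-1}. That is, the coassociator Φ is not the coboundary of any Drinfeld twist of the Hopf algebra Q: the quasi-Hopf algebra (Q, Φ) cannot be obtained as a Drinfeld twist of Q, so Φ defines a nontrivial class in the third Hopf-algebra cohomology of Q. -/

import Mathlib

open TensorProduct

set_option maxHeartbeats 1000000
set_option synthInstance.maxHeartbeats 400000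

noncomputable section

/-- Generators of the restricted quantum group `Q = \bar U_i sl(2)`. -/
inductive QGen : Type
  | E | F | K | Kinv
deriving DecidableEq

/-- The free algebra on the generators. -/
abbrev FA : Type := FreeAlgebra ℂ QGen

def ιE : FA := FreeAlgebra.ι ℂ QGen.E
def ιF : FA := FreeAlgebra.ι ℂ QGen.F
def ιK : FA := FreeAlgebra.ι ℂ QGen.K
def ιKi : FA := FreeAlgebra.ι ℂ QGen.Kinv

/-- Defining relations of `\bar U_i sl(2)` (at `q = i`, i.e. `p = 2`). -/
inductive QRel : FA → FA → Prop
  | KKi : QRel (ιK * ιKi) 1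
  | KiK : QRel (ιKi * ιK) 1
  | KEKi : QRel (ιK * ιE * ιKi) (-ιE)
  | KFKi : QRel (ιK * ιF * ιKi) (-ιF)
  | EF : QRel (ιE * ιF - ιF * ιE) ((2 * Complex.I)⁻¹ • (ιK - ιKi))
  | Esq : QRel (ιE ^ 2) 0
  | Fsq : QRel (ιF ^ 2) 0
  | K4 : QRel (ιK ^ 4) 1

/-- The restricted quantum group `\bar U_i sl(2)`: the quotient of the free algebra
by the two-sided ideal generated by the defining relations. -/
abbrev Q : Type := RingQuot QRel

def gE : Q := RingQuot.mkAlgHom ℂ QRel ιE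
def gF : Q := RingQuot.mkAlgHom ℂ QRel ιF
def gK : Q := RingQuot.mkAlgHom ℂ QRel ιK
def gKi : Q := RingQuot.mkAlgHom ℂ QRel ιKi

section Gadgets

variable (k : Type) [Field k] (A : Type) [Ring A] [Algebra k A]

abbrev TP2 : Type := A ⊗[k] A
abbrev TP3 : Type := A ⊗[k] (A ⊗[k] A)
abbrev TP4 : Type := A ⊗[k] (A ⊗[k] (A ⊗[k] A))

/-- Multiplication `a ⊗ b ↦ a * b`. -/
def mulA : TP2 k A →ₗ[k] A := LinearMap.mul' k A

/-- Tensor flip `a ⊗ b ↦ b ⊗ a`. -/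
def flipA : TP2 k A →ₗ[k] TP2 k A := (TensorProduct.comm k A A).toLinearMap

/-- `a ↦ a ⊗ 1`. -/
def lTen : A →ₗ[k] TP2 k A := (TensorProduct.mk k A A).flip 1

/-- `a ↦ 1 ⊗ a`. -/
def rTen : A →ₗ[k] TP2 k A := TensorProduct.mk k A A 1

/-- `a ⊗ b ↦ a ⊗ b ⊗ 1`. -/
def emb12 : TP2 k A →ₗ[k] TP3 k A := TensorProduct.map LinearMap.id (lTen k A)

/-- `a ⊗ b ↦ a ⊗ 1 ⊗ b`. -/
def emb13 : TP2 k A →ₗ[k] TP3 k A := TensorProduct.map LinearMap.id (rTen k A)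

/-- `a ⊗ b ↦ 1 ⊗ a ⊗ b`. -/
def emb23 : TP2 k A →ₗ[k] TP3 k A := TensorProduct.mk k A (TP2 k A) 1

/-- `a ⊗ b ⊗ c ↦ a ⊗ c ⊗ b`. -/
def perm132 : TP3 k A →ₗ[k] TP3 k A := TensorProduct.map LinearMap.id (flipA k A)

/-- `a ⊗ b ⊗ c ↦ b ⊗ c ⊗ a`. -/
def perm231 : TP3 k A →ₗ[k] TP3 k A :=
  (TensorProduct.assoc k A A A).toLinearMap ∘ₗ (TensorProduct.comm k A (TP2 k A)).toLinearMap

/-- `a ⊗ b ⊗ c ↦ c ⊗ a ⊗ b`. -/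
def perm312 : TP3 k A →ₗ[k] TP3 k A :=
  (TensorProduct.comm k (TP2 k A) A).toLinearMap ∘ₗ (TensorProduct.assoc k A A A).symm.toLinearMap

/-- `a ⊗ b ⊗ c ↦ b ⊗ a ⊗ c`. -/
def perm213 : TP3 k A →ₗ[k] TP3 k A :=
  (TensorProduct.assoc k A A A).toLinearMap ∘ₗ
    (TensorProduct.map (flipA k A) LinearMap.id) ∘ₗ (TensorProduct.assoc k A A A).symm.toLinearMap

variable {k A}

/-- `(Δ ⊗ id)` on two tensor factors, landing in the triple tensor product. -/
def copL (D : A →ₐ[k] TP2 k A) : TP2 k A →ₗ[k] TP3 k A :=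
  (TensorProduct.assoc k A A A).toLinearMap ∘ₗ TensorProduct.map D.toLinearMap LinearMap.id

/-- `(id ⊗ Δ)` on two tensor factors. -/
def copR (D : A →ₐ[k] TP2 k A) : TP2 k A →ₗ[k] TP3 k A :=
  TensorProduct.map LinearMap.id D.toLinearMap

/-- `(ε ⊗ id) : A ⊗ A → A`. -/
def cuL (ce : A →ₐ[k] k) : TP2 k A →ₗ[k] A :=
  (TensorProduct.lid k A).toLinearMap ∘ₗ TensorProduct.map ce.toLinearMap LinearMap.id

/-- `(id ⊗ ε) : A ⊗ A → A`. -/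
def cuR (ce : A →ₐ[k] k) : TP2 k A →ₗ[k] A :=
  (TensorProduct.rid k A).toLinearMap ∘ₗ TensorProduct.map LinearMap.id ce.toLinearMap

/-- `(id ⊗ ε ⊗ id) : A ⊗ A ⊗ A → A ⊗ A`. -/
def cuMid (ce : A →ₐ[k] k) : TP3 k A →ₗ[k] TP2 k A :=
  TensorProduct.map LinearMap.id (cuL ce)

/-- `(Δ ⊗ id ⊗ id)`. -/
def cop4_1 (D : A →ₐ[k] TP2 k A) : TP3 k A →ₗ[k] TP4 k A :=
  (TensorProduct.assoc k A A (TP2 k A)).toLinearMap ∘ₗ TensorProduct.map D.toLinearMap LinearMap.id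

/-- `(id ⊗ Δ ⊗ id)`. -/
def cop4_2 (D : A →ₐ[k] TP2 k A) : TP3 k A →ₗ[k] TP4 k A :=
  TensorProduct.map LinearMap.id (copL D)

/-- `(id ⊗ id ⊗ Δ)`. -/
def cop4_3 (D : A →ₐ[k] TP2 k A) : TP3 k A →ₗ[k] TP4 k A :=
  TensorProduct.map LinearMap.id (copR D)

/-- `a ⊗ b ⊗ c ↦ a ⊗ b ⊗ c ⊗ 1`, i.e. `Φ ↦ Φ ⊗ 1`. -/
def pad4 : TP3 k A →ₗ[k] TP4 k A :=
  TensorProduct.map LinearMap.id (TensorProduct.map LinearMap.id (lTen k A))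

/-- `a ⊗ b ⊗ c ↦ f(a) * g(b) * h(c)`. -/
def tmap3 (f g h : A →ₗ[k] A) : TP3 k A →ₗ[k] A :=
  mulA k A ∘ₗ TensorProduct.map f (mulA k A ∘ₗ TensorProduct.map g h)

/-- `a ⊗ b ↦ S(a) * b`, used in the antipode axiom `m ∘ (S ⊗ id) ∘ Δ = 1·ε`. -/
def antipL (s : A →ₗ[k] A) : TP2 k A →ₗ[k] A := mulA k A ∘ₗ TensorProduct.map s LinearMap.id

/-- `a ⊗ b ↦ a * S(b)`. -/
def antipR (s : A →ₗ[k] A) : TP2 k A →ₗ[k] A := mulA k A ∘ₗ TensorProduct.map LinearMap.id s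

end Gadgets

/-- Central idempotent `e₀ = (1 + K²)/2`. -/
def e0 : Q := (2:ℂ)⁻¹ • (1 + gK ^ 2)

/-- Central idempotent `e₁ = (1 − K²)/2`. -/
def e1 : Q := (2:ℂ)⁻¹ • (1 - gK ^ 2)

/-- `f⁺ = −i F`. -/
def fp : Q := (-Complex.I) • gF

/-- `f⁻ = E K⁻¹`. -/
def fm : Q := gE * gKi

/-- The Casimir element `C = FE − (i/4)(K − K⁻¹)`. -/
def Cas : Q := gF * gE - (Complex.I / 4) • (gK - gKi)

def t2 (a b : Q) : TP2 ℂ Q := a ⊗ₜ[ℂ] b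

def t3 (a b c : Q) : TP3 ℂ Q := a ⊗ₜ[ℂ] (b ⊗ₜ[ℂ] c)

def eEF : Q := gE * gF
def eEK : Q := gE * gK
def eFK : Q := gF * gK
def eEFK : Q := gE * gF * gK

/-- `Φ^{010}` component of the coassociator. -/
def Phi010 : TP3 ℂ Q :=
  t3 1 1 1 - (1 + Complex.I) • t3 gE gK gF + (1 - Complex.I) • t3 eFK gK eEK
    + (2:ℂ) • t3 eEFK 1 eEFK

/-- `Φ^{101}` component of the coassociator. -/
def Phi101 : TP3 ℂ Q :=
  (Complex.I - 1) • t3 1 gF eEK + t3 1 gK 1 + (2:ℂ) • t3 1 eEF eEFK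
    - (1 + Complex.I) • t3 1 eEK gF - (1 + Complex.I) • t3 gE eFK 1
    + (2 * Complex.I) • t3 gE eEFK gF + (1 - Complex.I) • t3 eFK gE 1
    - (2 * Complex.I) • t3 eFK eEFK eEK - (2:ℂ) • t3 eEFK eEF 1

/-- `Φ^{111}` component of the coassociator. -/
def Phi111 (β : ℂ) : TP3 ℂ Q :=
  (Complex.I * β ^ 2) • (
    (1 + Complex.I) • t3 1 gF eEK - t3 1 gK 1 - (2:ℂ) • t3 1 eEF 1
      - (2 * Complex.I) • t3 1 eEF eEFK + (1 + Complex.I) • t3 1 eEK gF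
      - (1 + Complex.I) • t3 gE 1 gF + (1 + Complex.I) • t3 gE eFK 1
      + (2 * Complex.I) • t3 gE eFK eEFK + (2:ℂ) • t3 gE eEFK gF
      - (1 + Complex.I) • t3 eFK 1 eEK + (1 + Complex.I) • t3 eFK gE 1
      + (2 * Complex.I) • t3 eFK gE eEFK + (2:ℂ) • t3 eFK eEFK eEK
      + (2 * Complex.I) • t3 eEFK gF eEK + (2 * Complex.I) • t3 eEFK gK eEFK
      - (2 * Complex.I) • t3 eEFK eEF 1 + (2 * Complex.I) • t3 eEFK eEK gF
      + (4:ℂ) • t3 eEFK eEF eEFK)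

/-- The coassociator `Φ` of the quasi-Hopf algebra structure on `Q`. -/
def Phi (β : ℂ) : TP3 ℂ Q :=
  t3 e0 e0 e0 + t3 e1 e0 e0 + Phi010 * t3 e0 e1 e0 + t3 e0 e0 e1
    + t3 e1 e1 e0 + Phi101 * t3 e1 e0 e1 + t3 e0 e1 e1 + Phi111 β * t3 e1 e1 e1

def R00 : TP2 ℂ Q :=
  (2:ℂ)⁻¹ • ((t2 1 1 + t2 1 gK + t2 gK 1 - t2 gK gK) * (t2 1 1 + (2 * Complex.I) • t2 gE gF))

def R01 : TP2 ℂ Q :=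
  (2:ℂ)⁻¹ • ((t2 1 1 - Complex.I • t2 1 gK + t2 gK 1 + Complex.I • t2 gK gK) *
    (t2 1 1 + (1 - Complex.I) • t2 eFK eEK - (1 - Complex.I) • t2 gE gF
      + (1 + Complex.I) • t2 eEFK 1 + (2 * Complex.I) • t2 eEFK eEFK))

def R10 : TP2 ℂ Q :=
  (2:ℂ)⁻¹ • ((t2 1 1 + t2 1 gK - Complex.I • t2 gK 1 + Complex.I • t2 gK gK) *
    (t2 1 gK + (1 - Complex.I) • t2 eFK gE + (1 - Complex.I) • t2 gE eFK
      - (1 - Complex.I) • t2 1 eEF - (2 * Complex.I) • t2 eEFK eEF))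

def R11 (β : ℂ) : TP2 ℂ Q :=
  (β / 2) • ((t2 1 1 - Complex.I • t2 1 gK - Complex.I • t2 gK 1 + t2 gK gK) *
    ((-Complex.I) • t2 gK 1 + (2 * Complex.I) • t2 eEK gF + (1 - Complex.I) • t2 gK eEFK
      - (1 + Complex.I) • t2 eEF 1 - (2 * Complex.I) • t2 eEF eEFK))

/-- The universal R-matrix `R` of the quasi-triangular quasi-Hopf structure on `Q`. -/
def Rmat (β : ℂ) : TP2 ℂ Q :=
  R00 * t2 e0 e0 + R01 * t2 e0 e1 + R10 * t2 e1 e0 + R11 β * t2 e1 e1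

/-- The standard R-matrix `R_st` of the quotient `Q/(K²-1)`. -/
def Rst : TP2 ℂ Q :=
  (2:ℂ)⁻¹ • ∑ m ∈ Finset.range 2, ∑ n ∈ Finset.range 2,
    ((-1:ℂ) ^ (m * n)) • (t2 (gK ^ m) (gK ^ n) * (t2 1 1 + (2 * Complex.I) • t2 gE gF))

/-- The monodromy matrix `M = R₂₁ · R`. -/
def Mmat (β : ℂ) : TP2 ℂ Q := flipA ℂ Q (Rmat β) * Rmat β

/-- The ribbon element `v = (e₀ − iβ K e₁)(1 − 2 f⁺ f⁻)`. -/
def vRib (β : ℂ) : Q := (e0 - (Complex.I * β) • (gK * e1)) * (1 - (2:ℂ) • (fp * fm))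

/-- The coevaluation element `β = e₀ − 2iβ² C e₁`. -/
def bbEl (β : ℂ) : Q := e0 - (2 * Complex.I * β ^ 2) • (Cas * e1)

/-- `b ⊗ c ↦ S(b · bb · S(c))`, inner part of the Drinfeld element. -/
def uInner (S : Q →ₗ[ℂ] Q) (bb : Q) : TP2 ℂ Q →ₗ[ℂ] Q :=
  S ∘ₗ mulA ℂ Q ∘ₗ TensorProduct.map (LinearMap.mulRight ℂ bb) S

/-- `Φ' ⊗ Φ'' ⊗ Φ''' ↦ S(Φ'' · bb · S(Φ''')) ⊗ Φ'`. -/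
def uMap1 (S : Q →ₗ[ℂ] Q) (bb : Q) : TP3 ℂ Q →ₗ[ℂ] TP2 ℂ Q :=
  TensorProduct.map (uInner S bb) LinearMap.id ∘ₗ (TensorProduct.comm ℂ Q (TP2 ℂ Q)).toLinearMap

/-- `R' ⊗ R'' ↦ S(R'') · al · R'`. -/
def uMap2 (S : Q →ₗ[ℂ] Q) (al : Q) : TP2 ℂ Q →ₗ[ℂ] Q :=
  mulA ℂ Q ∘ₗ TensorProduct.map (LinearMap.mulRight ℂ al ∘ₗ S) LinearMap.id ∘ₗ
    (TensorProduct.comm ℂ Q Q).toLinearMap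

/-- `(x ⊗ a) ⊗ (R' ⊗ R'') ↦ x · (S(R'') · al · R') · a`. -/
def uBig (S : Q →ₗ[ℂ] Q) (al : Q) : TP2 ℂ Q ⊗[ℂ] TP2 ℂ Q →ₗ[ℂ] Q :=
  mulA ℂ Q ∘ₗ TensorProduct.map LinearMap.id (mulA ℂ Q ∘ₗ (TensorProduct.comm ℂ Q Q).toLinearMap)
    ∘ₗ (TensorProduct.assoc ℂ Q Q Q).toLinearMap ∘ₗ TensorProduct.map LinearMap.id (uMap2 S al)

/-- The Drinfeld element `u = Σ S(Φ''·b·S(Φ'''))·S(R'')·α·R'·Φ'` (with `α = 1`). -/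
def uDrin (β : ℂ) (S : Q →ₗ[ℂ] Q) : Q :=
  uBig S 1 (uMap1 S (bbEl β) (Phi β) ⊗ₜ[ℂ] Rmat β)

/-- The balancing element `g = b · S(α) · v⁻¹ · u` (with `α = 1`). -/
def balG (β : ℂ) (S : Q →ₗ[ℂ] Q) : Q :=
  bbEl β * S 1 * Ring.inverse (vRib β) * uDrin β S

/-- The cointegral `c = (β²/i)·E·F·(1 + K + K² + K³)`. -/
def cInt (β : ℂ) : Q := (β ^ 2 / Complex.I) • (gE * gF * (1 + gK + gK ^ 2 + gK ^ 3))

/-- The q-trace of a one-dimensional representation, with balancing element `K⁻¹`. -/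
def qTr1 (ρ : Q →ₐ[ℂ] ℂ) : Q →ₗ[ℂ] ℂ := ρ.toLinearMap ∘ₗ LinearMap.mulLeft ℂ gK

/-- The q-trace of a two-dimensional (matrix) representation, with balancing element `K⁻¹`. -/
def qTrM (ρ : Q →ₐ[ℂ] Matrix (Fin 2) (Fin 2) ℂ) : Q →ₗ[ℂ] ℂ :=
  Matrix.traceLinearMap (Fin 2) ℂ ℂ ∘ₗ ρ.toLinearMap ∘ₗ LinearMap.mulLeft ℂ gK

/-- The Drinfeld mapping `φ ↦ (φ ⊗ id)(M)`. -/
def drinfeldImg (β : ℂ) (φ : Q →ₗ[ℂ] ℂ) : Q :=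
  (TensorProduct.lid ℂ Q) (TensorProduct.map φ LinearMap.id (Mmat β))

/-!
Let `χ` be the sign character of `Q`, on which `K` acts by `-1`. It is central in the category of
modules, since `K` intertwines `X ⊗ χ` and `χ ⊗ X`, and `χ ⊗ χ` is trivial. For a trivializing twist
`F` the elements `a = (id ⊗ χ)(F)` and `b = (χ ⊗ id)(F)` are central, because `F` commutes with the
comultiplication and translation by `χ` is surjective.

Evaluating one tensor factor of the coboundary equation at `χ` gives three equations. The
coassociator becomes `1` when its first or last factor is evaluated, and those two equations imply
`a² = b²`. Evaluated in its middle factor it becomes `Ψ = 1 - 2 e₁ ⊗ e₁`, and combining the three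
equations gives `Ψ (b ⊗ b) Δ(K a) = (a ⊗ a) Δ(K b)`.

The tensor square of the two-dimensional module with `K = diag(i, -i)` contains an invariant
vector. There `Δ(K a)` and `Δ(K b)` act by `ε(a) = ε(b) = 1`, while `Ψ` acts by `-1` and the central
elements `a`, `b` by scalars. Hence `-b² = a² = b²`, contradicting the invertibility of `a`.
-/

section PartialEvaluation

variable {k A B C D : Type*} [CommSemiring k] [Semiring A] [Algebra k A] [Semiring B] [Algebra k B]
  [Semiring C] [Algebra k C] [Semiring D] [Algebra k D]

/-- The partial evaluation `χ ⊗ id : A ⊗ B → B` at a character `χ` of the left factor. -/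
def evalLeft (χ : A →ₐ[k] k) : A ⊗[k] B →ₐ[k] B :=
  (Algebra.TensorProduct.lid k B).toAlgHom.comp (Algebra.TensorProduct.map χ (AlgHom.id k B))

/-- The partial evaluation `id ⊗ χ : A ⊗ B → A` at a character `χ` of the right factor. -/
def evalRight (χ : B →ₐ[k] k) : A ⊗[k] B →ₐ[k] A :=
  (Algebra.TensorProduct.rid k k A).toAlgHom.comp (Algebra.TensorProduct.map (AlgHom.id k A) χ)

@[simp]
lemma evalLeft_tmul (χ : A →ₐ[k] k) (a : A) (b : B) : evalLeft χ (a ⊗ₜ[k] b) = χ a • b := by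
  simp [evalLeft]

@[simp]
lemma evalRight_tmul (χ : B →ₐ[k] k) (a : A) (b : B) : evalRight χ (a ⊗ₜ[k] b) = χ b • a := by
  simp [evalRight]

lemma evalLeft_map (χ : C →ₐ[k] k) (f : A →ₐ[k] C) (g : B →ₐ[k] D) (x : A ⊗[k] B) :
    evalLeft χ (Algebra.TensorProduct.map f g x) = g (evalLeft (χ.comp f) x) := by
  induction x with
  | zero => simp only [map_zero]
  | tmul a b => simp
  | add x y hx hy => simp only [map_add, hx, hy]

lemma evalRight_map (χ : D →ₐ[k] k) (f : A →ₐ[k] C) (g : B →ₐ[k] D) (x : A ⊗[k] B) :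
    evalRight χ (Algebra.TensorProduct.map f g x) = f (evalRight (χ.comp g) x) := by
  induction x with
  | zero => simp only [map_zero]
  | tmul a b => simp
  | add x y hx hy => simp only [map_add, hx, hy]

lemma apply_evalRight (φ : A →ₐ[k] k) (χ : B →ₐ[k] k) (x : A ⊗[k] B) :
    φ (evalRight χ x) = χ (evalLeft φ x) := by
  induction x with
  | zero => simp only [map_zero]
  | tmul a b => simp [mul_comm]
  | add x y hx hy => simp only [map_add, hx, hy]

lemma semiconjBy_tmul_map {f f' : A →ₐ[k] C} {g g' : B →ₐ[k] D} {c : C} {d : D}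
    (hc : ∀ a, SemiconjBy c (f a) (f' a)) (hd : ∀ b, SemiconjBy d (g b) (g' b)) (x : A ⊗[k] B) :
    SemiconjBy (c ⊗ₜ[k] d) (Algebra.TensorProduct.map f g x)
      (Algebra.TensorProduct.map f' g' x) := by
  induction x with
  | zero => simp only [map_zero, SemiconjBy.zero_right]
  | tmul a b => simp [SemiconjBy, (hc a).eq, (hd b).eq]
  | add x y hx hy => simpa only [map_add] using hx.add_right hy

lemma commute_tmul_of_mem_center {c : A} {d : B} (hc : c ∈ Subalgebra.center k A)
    (hd : d ∈ Subalgebra.center k B) (x : A ⊗[k] B) : Commute (c ⊗ₜ[k] d) x := by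
  have h := semiconjBy_tmul_map (f := AlgHom.id k A) (f' := AlgHom.id k A) (g := AlgHom.id k B)
    (g' := AlgHom.id k B) (fun a => (Subalgebra.mem_center_iff.mp hc a).symm)
    (fun b => (Subalgebra.mem_center_iff.mp hd b).symm) x
  rwa [Algebra.TensorProduct.map_id] at h

lemma map_mem_center_of_surjective {f : A →ₐ[k] B} (hf : Function.Surjective f) {c : A}
    (hc : c ∈ Subalgebra.center k A) : f c ∈ Subalgebra.center k B := by
  refine Subalgebra.mem_center_iff.mpr fun b => ?_
  obtain ⟨a, rfl⟩ := hf b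
  rw [← map_mul, ← map_mul, Subalgebra.mem_center_iff.mp hc a]

end PartialEvaluation

section TripleTensorProduct

variable {k : Type} [Field k] {A : Type} [Ring A] [Algebra k A]

/-- The partial evaluation `id ⊗ χ ⊗ id : A ⊗ A ⊗ A → A ⊗ A`. -/
def evalMiddle (χ : A →ₐ[k] k) : TP3 k A →ₐ[k] TP2 k A :=
  Algebra.TensorProduct.map (AlgHom.id k A) (evalLeft χ)

/-- The partial evaluation `id ⊗ id ⊗ χ : A ⊗ A ⊗ A → A ⊗ A`. -/
def evalLast (χ : A →ₐ[k] k) : TP3 k A →ₐ[k] TP2 k A :=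
  Algebra.TensorProduct.map (AlgHom.id k A) (evalRight χ)

@[simp]
lemma evalMiddle_tmul (χ : A →ₐ[k] k) (a : A) (x : TP2 k A) :
    evalMiddle χ (a ⊗ₜ[k] x) = a ⊗ₜ[k] evalLeft χ x := rfl

@[simp]
lemma evalLast_tmul (χ : A →ₐ[k] k) (a : A) (x : TP2 k A) :
    evalLast χ (a ⊗ₜ[k] x) = a ⊗ₜ[k] evalRight χ x := rfl

lemma evalLeft_emb12 (χ : A →ₐ[k] k) (x : TP2 k A) :
    evalLeft χ (emb12 k A x) = evalLeft χ x ⊗ₜ[k] 1 :=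
  evalLeft_map χ (AlgHom.id k A) Algebra.TensorProduct.includeLeft x

lemma evalMiddle_emb12 (χ : A →ₐ[k] k) (x : TP2 k A) :
    evalMiddle χ (emb12 k A x) = evalRight χ x ⊗ₜ[k] 1 := by
  induction x using TensorProduct.induction_on with
  | zero => simp only [map_zero, zero_tmul]
  | tmul a b => simp [emb12, lTen, TensorProduct.smul_tmul]
  | add x y hx hy => simp only [map_add, hx, hy, add_tmul]

lemma evalLast_emb12 (χ : A →ₐ[k] k) (x : TP2 k A) : evalLast χ (emb12 k A x) = x := by
  induction x using TensorProduct.induction_on with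
  | zero => simp only [map_zero]
  | tmul a b => simp [emb12, lTen]
  | add x y hx hy => simp only [map_add, hx, hy]

lemma evalLeft_assoc (χ : A →ₐ[k] k) (x : TP2 k A ⊗[k] A) :
    evalLeft χ (TensorProduct.assoc k A A A x) =
      Algebra.TensorProduct.map (evalLeft χ) (AlgHom.id k A) x := by
  have h : (evalLeft χ).toLinearMap ∘ₗ (TensorProduct.assoc k A A A).toLinearMap =
      (Algebra.TensorProduct.map (evalLeft χ) (AlgHom.id k A)).toLinearMap :=
    TensorProduct.ext_threefold fun a b c => by simp [smul_tmul']
  exact LinearMap.congr_fun h x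

lemma evalMiddle_assoc (χ : A →ₐ[k] k) (x : TP2 k A ⊗[k] A) :
    evalMiddle χ (TensorProduct.assoc k A A A x) =
      Algebra.TensorProduct.map (evalRight χ) (AlgHom.id k A) x := by
  have h : (evalMiddle χ).toLinearMap ∘ₗ (TensorProduct.assoc k A A A).toLinearMap =
      (Algebra.TensorProduct.map (evalRight χ) (AlgHom.id k A)).toLinearMap :=
    TensorProduct.ext_threefold fun a b c => by simp [smul_tmul]
  exact LinearMap.congr_fun h x

lemma evalLast_assoc (χ : A →ₐ[k] k) (x : TP2 k A ⊗[k] A) :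
    evalLast χ (TensorProduct.assoc k A A A x) = evalRight χ x := by
  have h : (evalLast χ).toLinearMap ∘ₗ (TensorProduct.assoc k A A A).toLinearMap =
      (evalRight χ).toLinearMap :=
    TensorProduct.ext_threefold fun a b c => by simp
  exact LinearMap.congr_fun h x

/-- The endomorphism `(χ ⊗ id) ∘ Δ` of `A`, which twists `A`-modules by tensoring with `χ` on the
left. -/
def leftTranslate (Δ : A →ₐ[k] TP2 k A) (χ : A →ₐ[k] k) : A →ₐ[k] A := (evalLeft χ).comp Δ

/-- The endomorphism `(id ⊗ χ) ∘ Δ` of `A`, which twists `A`-modules by tensoring with `χ` on the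
right. -/
def rightTranslate (Δ : A →ₐ[k] TP2 k A) (χ : A →ₐ[k] k) : A →ₐ[k] A := (evalRight χ).comp Δ

lemma leftTranslate_apply (Δ : A →ₐ[k] TP2 k A) (χ : A →ₐ[k] k) (a : A) :
    leftTranslate Δ χ a = evalLeft χ (Δ a) := rfl

lemma rightTranslate_apply (Δ : A →ₐ[k] TP2 k A) (χ : A →ₐ[k] k) (a : A) :
    rightTranslate Δ χ a = evalRight χ (Δ a) := rfl

lemma evalLeft_copR (Δ : A →ₐ[k] TP2 k A) (χ : A →ₐ[k] k) (x : TP2 k A) :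
    evalLeft χ (copR Δ x) = Δ (evalLeft χ x) :=
  evalLeft_map χ (AlgHom.id k A) Δ x

lemma evalMiddle_copR (Δ : A →ₐ[k] TP2 k A) (χ : A →ₐ[k] k) (x : TP2 k A) :
    evalMiddle χ (copR Δ x) =
      Algebra.TensorProduct.map (AlgHom.id k A) (leftTranslate Δ χ) x := by
  rw [leftTranslate, ← AlgHom.comp_id (AlgHom.id k A), Algebra.TensorProduct.map_comp]
  rfl

lemma evalLast_copR (Δ : A →ₐ[k] TP2 k A) (χ : A →ₐ[k] k) (x : TP2 k A) :
    evalLast χ (copR Δ x) =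
      Algebra.TensorProduct.map (AlgHom.id k A) (rightTranslate Δ χ) x := by
  rw [rightTranslate, ← AlgHom.comp_id (AlgHom.id k A), Algebra.TensorProduct.map_comp]
  rfl

lemma evalLeft_copL (Δ : A →ₐ[k] TP2 k A) (χ : A →ₐ[k] k) (x : TP2 k A) :
    evalLeft χ (copL Δ x) =
      Algebra.TensorProduct.map (leftTranslate Δ χ) (AlgHom.id k A) x := by
  rw [leftTranslate, ← AlgHom.comp_id (AlgHom.id k A), Algebra.TensorProduct.map_comp]
  exact evalLeft_assoc χ _

lemma evalMiddle_copL (Δ : A →ₐ[k] TP2 k A) (χ : A →ₐ[k] k) (x : TP2 k A) :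
    evalMiddle χ (copL Δ x) =
      Algebra.TensorProduct.map (rightTranslate Δ χ) (AlgHom.id k A) x := by
  rw [rightTranslate, ← AlgHom.comp_id (AlgHom.id k A), Algebra.TensorProduct.map_comp]
  exact evalMiddle_assoc χ _

lemma evalLast_copL (Δ : A →ₐ[k] TP2 k A) (χ : A →ₐ[k] k) (x : TP2 k A) :
    evalLast χ (copL Δ x) = Δ (evalRight χ x) :=
  (evalLast_assoc χ _).trans (evalRight_map χ Δ (AlgHom.id k A) x)

end TripleTensorProduct

section Twist

open scoped Matrix

variable {k : Type} [Field k] {A : Type} [Ring A] [Algebra k A]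
  {Δ : A →ₐ[k] TP2 k A} {ε χ : A →ₐ[k] k} {g : A} {Φ : TP3 k A} {F : TP2 k A}

/-- `F` is a Drinfeld twist, normalised with respect to `ε`, which leaves the comultiplication `Δ`
unchanged and whose coboundary is `Φ`. The coboundary equation is stated without inverses. -/
structure IsTrivializingTwist (Δ : A →ₐ[k] TP2 k A) (ε : A →ₐ[k] k) (Φ : TP3 k A)
    (F : TP2 k A) : Prop where
  isUnit : IsUnit F
  evalLeft_counit : evalLeft ε F = 1
  evalRight_counit : evalRight ε F = 1
  commute_comul (a : A) : Commute F (Δ a)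
  coboundary : Φ * (1 ⊗ₜ[k] F) * copR Δ F = emb12 k A F * copL Δ F

/-- The character `χ` is a central involution for the comultiplication `Δ`: tensoring a module
with `χ` twice gives back the module, and the group-like element `g` acts as an isomorphism
`X ⊗ χ ≃ χ ⊗ X` for every module `X`. -/
structure IsCentralInvolution (Δ : A →ₐ[k] TP2 k A) (ε χ : A →ₐ[k] k) (g : A) : Prop where
  isUnit : IsUnit g
  comul : Δ g = g ⊗ₜ[k] g
  comp_rightTranslate : χ.comp (rightTranslate Δ χ) = ε
  rightTranslate_surjective : Function.Surjective (rightTranslate Δ χ)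
  semiconjBy (a : A) : SemiconjBy g (rightTranslate Δ χ a) (leftTranslate Δ χ a)

namespace IsCentralInvolution

lemma comp_leftTranslate (hχ : IsCentralInvolution Δ ε χ g) : χ.comp (leftTranslate Δ χ) = ε := by
  rw [← hχ.comp_rightTranslate]
  ext a
  exact (apply_evalRight χ χ (Δ a)).symm

lemma leftTranslate_surjective (hχ : IsCentralInvolution Δ ε χ g) :
    Function.Surjective (leftTranslate Δ χ) := by
  obtain ⟨u, rfl⟩ := hχ.isUnit
  intro b
  obtain ⟨a, ha⟩ := hχ.rightTranslate_surjective (↑u⁻¹ * b * u)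
  refine ⟨a, u.isUnit.mul_right_cancel ?_⟩
  rw [← (hχ.semiconjBy a).eq, ha, mul_assoc, Units.mul_inv_cancel_left]

lemma leftTranslate_eq_rightTranslate (hχ : IsCentralInvolution Δ ε χ g) {c : A}
    (hc : c ∈ Subalgebra.center k A) : leftTranslate Δ χ c = rightTranslate Δ χ c := by
  have hc' := map_mem_center_of_surjective hχ.rightTranslate_surjective hc
  refine hχ.isUnit.mul_right_cancel ?_
  rw [← (hχ.semiconjBy c).eq, Subalgebra.mem_center_iff.mp hc' g]

end IsCentralInvolution

/-- The tensor square `ρ ⊗ ρ` of a matrix representation `ρ` of `A`, as a representation of `A ⊗ A`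
by Kronecker products. -/
def tensorSquare {n : Type*} [Fintype n] [DecidableEq n] (ρ : A →ₐ[k] Matrix n n k) :
    TP2 k A →ₐ[k] Matrix (n × n) (n × n) k :=
  (Matrix.kroneckerAlgEquiv n n k).toAlgHom.comp (Algebra.TensorProduct.map ρ ρ)

lemma tensorSquare_tmul {n : Type*} [Fintype n] [DecidableEq n] (ρ : A →ₐ[k] Matrix n n k)
    (a b : A) : tensorSquare ρ (a ⊗ₜ[k] b) = Matrix.kronecker (ρ a) (ρ b) := rfl

lemma tensorSquare_tmul_of_eq_algebraMap {n : Type*} [Fintype n] [DecidableEq n]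
    {ρ : A →ₐ[k] Matrix n n k} {a b : A} {s t : k} (ha : ρ a = algebraMap k _ s)
    (hb : ρ b = algebraMap k _ t) : tensorSquare ρ (a ⊗ₜ[k] b) = algebraMap k _ (s * t) := by
  simp [tensorSquare_tmul, ha, hb, Algebra.algebraMap_eq_smul_one, Matrix.smul_kronecker,
    Matrix.kronecker_smul, smul_smul, mul_comm]

namespace IsTrivializingTwist

lemma of_inverse (hF : IsUnit F) (hεF : cuL ε F = 1) (hFε : cuR ε F = 1)
    (hFΔ : ∀ a, F * Δ a * Ring.inverse F = Δ a)
    (hΦ : Φ = emb12 k A F * copL Δ F * Ring.inverse (copR Δ F) *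
      Ring.inverse ((1 : A) ⊗ₜ[k] F)) :
    IsTrivializingTwist Δ ε Φ F where
  isUnit := hF
  evalLeft_counit := hεF
  evalRight_counit := hFε
  commute_comul a := by
    have h := congrArg (· * F) (hFΔ a)
    rwa [Ring.inverse_mul_cancel_right _ _ hF] at h
  coboundary := by
    have hR : IsUnit (copR Δ F) := hF.map (Algebra.TensorProduct.map (AlgHom.id k A) Δ)
    have h23 : IsUnit ((1 : A) ⊗ₜ[k] F) :=
      hF.map (Algebra.TensorProduct.includeRight : TP2 k A →ₐ[k] TP3 k A)
    rw [hΦ, Ring.inverse_mul_cancel_right _ _ h23, Ring.inverse_mul_cancel_right _ _ hR]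

lemma tmul_evalRight_mul_map (hF : IsTrivializingTwist Δ ε Φ F) (hΦ : evalLast χ Φ = 1) :
    (1 ⊗ₜ[k] evalRight χ F) * Algebra.TensorProduct.map (AlgHom.id k A) (rightTranslate Δ χ) F =
      F * Δ (evalRight χ F) := by
  simpa only [map_mul, hΦ, one_mul, evalLast_tmul, evalLast_copR, evalLast_emb12, evalLast_copL]
    using congrArg (evalLast χ) hF.coboundary

lemma evalLeft_tmul_mul_map (hF : IsTrivializingTwist Δ ε Φ F) (hΦ : evalLeft χ Φ = 1) :
    (evalLeft χ F ⊗ₜ[k] 1) * Algebra.TensorProduct.map (leftTranslate Δ χ) (AlgHom.id k A) F =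
      F * Δ (evalLeft χ F) := by
  simpa only [map_mul, hΦ, one_mul, evalLeft_tmul, map_one, one_smul, evalLeft_copR,
    evalLeft_emb12, evalLeft_copL] using (congrArg (evalLeft χ) hF.coboundary).symm

lemma evalMiddle_mul_tmul_mul_map (hF : IsTrivializingTwist Δ ε Φ F) :
    evalMiddle χ Φ * (1 ⊗ₜ[k] evalLeft χ F) *
        Algebra.TensorProduct.map (AlgHom.id k A) (leftTranslate Δ χ) F =
      (evalRight χ F ⊗ₜ[k] 1) *
        Algebra.TensorProduct.map (rightTranslate Δ χ) (AlgHom.id k A) F := by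
  simpa only [map_mul, evalMiddle_tmul, evalMiddle_copR, evalMiddle_emb12, evalMiddle_copL]
    using congrArg (evalMiddle χ) hF.coboundary

lemma evalRight_mem_center (hF : IsTrivializingTwist Δ ε Φ F)
    (hχ : Function.Surjective (rightTranslate Δ χ)) :
    evalRight χ F ∈ Subalgebra.center k A := by
  refine Subalgebra.mem_center_iff.mpr fun b => ?_
  obtain ⟨a, rfl⟩ := hχ b
  exact ((hF.commute_comul a).map (evalRight χ)).eq.symm

lemma evalLeft_mem_center (hF : IsTrivializingTwist Δ ε Φ F)
    (hχ : Function.Surjective (leftTranslate Δ χ)) :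
    evalLeft χ F ∈ Subalgebra.center k A := by
  refine Subalgebra.mem_center_iff.mpr fun b => ?_
  obtain ⟨a, rfl⟩ := hχ b
  exact ((hF.commute_comul a).map (evalLeft χ)).eq.symm

lemma counit_evalRight (hF : IsTrivializingTwist Δ ε Φ F) : ε (evalRight χ F) = 1 := by
  rw [apply_evalRight, hF.evalLeft_counit, map_one]

lemma counit_evalLeft (hF : IsTrivializingTwist Δ ε Φ F) : ε (evalLeft χ F) = 1 := by
  rw [← apply_evalRight, hF.evalRight_counit, map_one]

lemma evalRight_mul_rightTranslate (hF : IsTrivializingTwist Δ ε Φ F)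
    (hχ : χ.comp (rightTranslate Δ χ) = ε) (hΦ : evalLast χ Φ = 1) :
    evalRight χ F * rightTranslate Δ χ (evalRight χ F) =
      algebraMap k A (χ (evalRight χ F)) := by
  have h := congrArg (evalRight χ) (hF.tmul_evalRight_mul_map hΦ)
  rw [map_mul, map_mul, evalRight_tmul, evalRight_map, hχ, hF.evalRight_counit, map_one,
    mul_one] at h
  rw [Algebra.algebraMap_eq_smul_one, h, rightTranslate_apply]

lemma evalLeft_mul_leftTranslate (hF : IsTrivializingTwist Δ ε Φ F)
    (hχ : χ.comp (leftTranslate Δ χ) = ε) (hΦ : evalLeft χ Φ = 1) :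
    evalLeft χ F * leftTranslate Δ χ (evalLeft χ F) =
      algebraMap k A (χ (evalLeft χ F)) := by
  have h := congrArg (evalLeft χ) (hF.evalLeft_tmul_mul_map hΦ)
  rw [map_mul, map_mul, evalLeft_tmul, evalLeft_map, hχ, hF.evalLeft_counit, map_one,
    mul_one] at h
  rw [Algebra.algebraMap_eq_smul_one, h, leftTranslate_apply]

lemma evalRight_mul_rightTranslate_evalLeft (hF : IsTrivializingTwist Δ ε Φ F)
    (hΦ : evalLast χ Φ = 1) :
    evalRight χ F * rightTranslate Δ χ (evalLeft χ F) =
      evalLeft χ F * leftTranslate Δ χ (evalRight χ F) := by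
  have h := congrArg (evalLeft χ) (hF.tmul_evalRight_mul_map hΦ)
  rwa [map_mul, map_mul, evalLeft_tmul, map_one, one_smul, evalLeft_map, AlgHom.comp_id] at h

theorem evalRight_mul_self (hF : IsTrivializingTwist Δ ε Φ F) (hχ : IsCentralInvolution Δ ε χ g)
    (hΦ : evalLeft χ Φ = 1) (hΦ' : evalLast χ Φ = 1) :
    evalRight χ F * evalRight χ F = evalLeft χ F * evalLeft χ F := by
  set a := evalRight χ F
  set b := evalLeft χ F
  set θ := rightTranslate Δ χ
  have ha_center : a ∈ Subalgebra.center k A :=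
    hF.evalRight_mem_center hχ.rightTranslate_surjective
  have hb_center : b ∈ Subalgebra.center k A := hF.evalLeft_mem_center hχ.leftTranslate_surjective
  have hab : a * θ b = b * θ a := by
    rw [← hχ.leftTranslate_eq_rightTranslate ha_center]
    exact hF.evalRight_mul_rightTranslate_evalLeft hΦ'
  have hnorm : a * θ a = b * θ b := by
    rw [← hχ.leftTranslate_eq_rightTranslate hb_center,
      hF.evalLeft_mul_leftTranslate hχ.comp_leftTranslate hΦ,
      hF.evalRight_mul_rightTranslate hχ.comp_rightTranslate hΦ', apply_evalRight]
  have hθa : IsUnit (θ a) := (hF.isUnit.map (evalRight χ)).map θ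
  refine hθa.mul_right_cancel ?_
  calc a * a * θ a = a * b * θ b := by rw [mul_assoc, hnorm, mul_assoc]
    _ = b * (a * θ b) := by rw [Subalgebra.mem_center_iff.mp hb_center a, mul_assoc]
    _ = b * b * θ a := by rw [hab, mul_assoc]

lemma tmul_mul_map_mul_tmul (hF : IsTrivializingTwist Δ ε Φ F)
    (hχ : IsCentralInvolution Δ ε χ g) (hΦ : evalLast χ Φ = 1) :
    (1 ⊗ₜ[k] evalRight χ F) * Algebra.TensorProduct.map (AlgHom.id k A) (leftTranslate Δ χ) F *
        (1 ⊗ₜ[k] g) =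
      (1 ⊗ₜ[k] g) * (F * Δ (evalRight χ F)) := by
  have ha := hF.evalRight_mem_center hχ.rightTranslate_surjective
  have hg := semiconjBy_tmul_map (f := AlgHom.id k A) (fun _ => SemiconjBy.one_left _)
    hχ.semiconjBy F
  rw [mul_assoc, ← hg.eq, ← mul_assoc, (commute_tmul_of_mem_center (one_mem _) ha _).eq,
    mul_assoc, hF.tmul_evalRight_mul_map hΦ]

lemma tmul_mul_tmul_mul_map (hF : IsTrivializingTwist Δ ε Φ F)
    (hχ : IsCentralInvolution Δ ε χ g) (hΦ : evalLeft χ Φ = 1) :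
    (g ⊗ₜ[k] 1) * ((evalLeft χ F ⊗ₜ[k] 1) *
        Algebra.TensorProduct.map (rightTranslate Δ χ) (AlgHom.id k A) F) =
      F * Δ (evalLeft χ F) * (g ⊗ₜ[k] 1) := by
  have hb := hF.evalLeft_mem_center hχ.leftTranslate_surjective
  have hg := semiconjBy_tmul_map (g := AlgHom.id k A) hχ.semiconjBy
    (fun _ => SemiconjBy.one_left _) F
  rw [← mul_assoc, ← (commute_tmul_of_mem_center hb (one_mem _) _).eq, mul_assoc, hg.eq,
    ← mul_assoc, hF.evalLeft_tmul_mul_map hΦ]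

lemma evalMiddle_mul_tmul_mul_tmul_mul_map (hF : IsTrivializingTwist Δ ε Φ F)
    (hχ : IsCentralInvolution Δ ε χ g) :
    evalMiddle χ Φ * (evalLeft χ F ⊗ₜ[k] evalLeft χ F) * ((1 ⊗ₜ[k] evalRight χ F) *
        Algebra.TensorProduct.map (AlgHom.id k A) (leftTranslate Δ χ) F) =
      (evalRight χ F ⊗ₜ[k] evalRight χ F) * ((evalLeft χ F ⊗ₜ[k] 1) *
        Algebra.TensorProduct.map (rightTranslate Δ χ) (AlgHom.id k A) F) := by
  set a := evalRight χ F
  set b := evalLeft χ F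
  have ha : a ∈ Subalgebra.center k A := hF.evalRight_mem_center hχ.rightTranslate_surjective
  have hb : b ∈ Subalgebra.center k A := hF.evalLeft_mem_center hχ.leftTranslate_surjective
  have hba := commute_tmul_of_mem_center hb ha
  calc _ = evalMiddle χ Φ * (b ⊗ₜ[k] a * 1 ⊗ₜ[k] b) *
        Algebra.TensorProduct.map (AlgHom.id k A) (leftTranslate Δ χ) F := by
        rw [(hba _).eq]
        simp only [mul_assoc, ← mul_assoc (_ ⊗ₜ[k] _) (_ ⊗ₜ[k] _),
          Algebra.TensorProduct.tmul_mul_tmul, mul_one, one_mul]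
    _ = (b ⊗ₜ[k] a) * (evalMiddle χ Φ * (1 ⊗ₜ[k] b) *
        Algebra.TensorProduct.map (AlgHom.id k A) (leftTranslate Δ χ) F) := by
        rw [← mul_assoc, ← (hba _).eq]
        simp only [mul_assoc]
    _ = (b ⊗ₜ[k] a) * ((a ⊗ₜ[k] 1) *
        Algebra.TensorProduct.map (rightTranslate Δ χ) (AlgHom.id k A) F) := by
        rw [hF.evalMiddle_mul_tmul_mul_map]
    _ = _ := by
        simp only [← mul_assoc, Algebra.TensorProduct.tmul_mul_tmul, mul_one,
          Subalgebra.mem_center_iff.mp ha b]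

/-- Multiplying the middle evaluation of the coboundary equation by `g ⊗ 1` on the left and by
`1 ⊗ g` on the right exchanges left and right translates, so that the outer evaluations apply. -/
theorem evalMiddle_mul_comul (hF : IsTrivializingTwist Δ ε Φ F)
    (hχ : IsCentralInvolution Δ ε χ g) (hΦ : evalLeft χ Φ = 1) (hΦ' : evalLast χ Φ = 1)
    (hΦg : Commute (g ⊗ₜ[k] 1) (evalMiddle χ Φ)) :
    evalMiddle χ Φ * (evalLeft χ F ⊗ₜ[k] evalLeft χ F) * Δ (g * evalRight χ F) =
      (evalRight χ F ⊗ₜ[k] evalRight χ F) * Δ (g * evalLeft χ F) := by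
  have ha := hF.evalRight_mem_center hχ.rightTranslate_surjective
  have hb := hF.evalLeft_mem_center hχ.leftTranslate_surjective
  have hgΨ := hΦg.mul_right (commute_tmul_of_mem_center hb hb (g ⊗ₜ[k] 1)).symm
  have hga := commute_tmul_of_mem_center ha ha (g ⊗ₜ[k] 1)
  have key := hF.evalMiddle_mul_tmul_mul_tmul_mul_map hχ
  have hleft := hF.tmul_mul_map_mul_tmul hχ hΦ'
  have hright := hF.tmul_mul_tmul_mul_map hχ hΦ
  have hΔg : Δ g = g ⊗ₜ[k] 1 * 1 ⊗ₜ[k] g := by simp [hχ.comul]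
  set a := evalRight χ F
  set b := evalLeft χ F
  set Ψ := evalMiddle χ Φ * b ⊗ₜ[k] b
  set X := Algebra.TensorProduct.map (AlgHom.id k A) (leftTranslate Δ χ) F
  set Y := Algebra.TensorProduct.map (rightTranslate Δ χ) (AlgHom.id k A) F
  refine hF.isUnit.mul_right_cancel ?_
  calc Ψ * Δ (g * a) * F
      = Ψ * (g ⊗ₜ[k] 1 * (1 ⊗ₜ[k] g * (F * Δ a))) := by
        rw [mul_assoc, ← (hF.commute_comul _).eq, map_mul, ← mul_assoc F,
          (hF.commute_comul g).eq, hΔg]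
        simp only [mul_assoc]
    _ = g ⊗ₜ[k] 1 * (Ψ * (1 ⊗ₜ[k] a * X)) * 1 ⊗ₜ[k] g := by
        rw [← hleft, ← mul_assoc, ← hgΨ.eq]
        simp only [mul_assoc]
    _ = a ⊗ₜ[k] a * (g ⊗ₜ[k] 1 * (b ⊗ₜ[k] 1 * Y)) * 1 ⊗ₜ[k] g := by
        rw [key, ← mul_assoc, ← hga.eq, mul_assoc (a ⊗ₜ[k] a)]
    _ = a ⊗ₜ[k] a * (F * (Δ b * Δ g)) := by
        rw [hright, hΔg]
        simp only [mul_assoc]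
    _ = a ⊗ₜ[k] a * Δ (g * b) * F := by
        rw [← map_mul, (hF.commute_comul _).eq, Subalgebra.mem_center_iff.mp hb g, mul_assoc]

end IsTrivializingTwist

theorem IsCentralInvolution.not_isTrivializingTwist {n : Type*} [Fintype n] [DecidableEq n]
    [NeZero (2 : k)] {ρ : A →ₐ[k] Matrix n n k} {v : n × n → k} (hχ : IsCentralInvolution Δ ε χ g)
    (hΦ : evalLeft χ Φ = 1) (hΦ' : evalLast χ Φ = 1)
    (hΦg : Commute (g ⊗ₜ[k] 1) (evalMiddle χ Φ))
    (hρ : ∀ c ∈ Subalgebra.center k A, ∃ s : k, ρ c = algebraMap k _ s) (hv : v ≠ 0)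
    (hΔv : ∀ a, tensorSquare ρ (Δ a) *ᵥ v = ε a • v)
    (hρΦ : tensorSquare ρ (evalMiddle χ Φ) = -1) : ¬ IsTrivializingTwist Δ ε Φ F := by
  intro hF
  obtain ⟨s, hs⟩ := hρ _ (hF.evalRight_mem_center hχ.rightTranslate_surjective)
  obtain ⟨t, ht⟩ := hρ _ (hF.evalLeft_mem_center hχ.leftTranslate_surjective)
  obtain ⟨⟨i, -⟩, -⟩ := Function.ne_iff.mp hv
  have : Nonempty n := ⟨i⟩
  have hsq : s * s = t * t := by
    apply FaithfulSMul.algebraMap_injective k (Matrix n n k)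
    rw [map_mul, map_mul, ← hs, ← ht, ← map_mul, hF.evalRight_mul_self hχ hΦ hΦ', map_mul]
  have hneg : (-(t * t) * ε g) • v = (s * s * ε g) • v := by
    have h := congrArg (fun x => tensorSquare ρ x *ᵥ v) (hF.evalMiddle_mul_comul hχ hΦ hΦ' hΦg)
    simpa [tensorSquare_tmul_of_eq_algebraMap hs hs, tensorSquare_tmul_of_eq_algebraMap ht ht,
      hρΦ, ← Matrix.mulVec_mulVec, hΔv, hF.counit_evalLeft, hF.counit_evalRight,
      Algebra.algebraMap_eq_smul_one, Matrix.mulVec_smul, Matrix.smul_mulVec, Matrix.neg_mulVec,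
      smul_smul, mul_comm, mul_left_comm] using h
  have hεg : ε g ≠ 0 := (hχ.isUnit.map ε).ne_zero
  have hs0 : s ≠ 0 := by
    rintro rfl
    have hu : IsUnit (ρ (evalRight χ F)) := (hF.isUnit.map (evalRight χ)).map ρ
    exact not_isUnit_zero (by rwa [hs, map_zero] at hu)
  have h := mul_right_cancel₀ hεg (smul_left_injective k hv hneg)
  rw [← hsq, neg_eq_iff_add_eq_zero, ← two_mul] at h
  exact mul_ne_zero two_ne_zero (mul_ne_zero hs0 hs0) h

end Twist

namespace Q

lemma K_mul_Kinv : gK * gKi = 1 := by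
  simpa [gK, gKi] using RingQuot.mkAlgHom_rel ℂ QRel.KKi

lemma Kinv_mul_K : gKi * gK = 1 := by
  simpa [gK, gKi] using RingQuot.mkAlgHom_rel ℂ QRel.KiK

lemma K_mul_E : gK * gE = (-1 : ℂ) • (gE * gK) := by
  have h : gK * gE * gKi = (-1 : ℂ) • gE := by
    have h := RingQuot.mkAlgHom_rel ℂ QRel.KEKi
    rwa [← neg_one_smul ℂ ιE, map_smul, map_mul, map_mul] at h
  rw [← smul_mul_assoc, ← h, mul_assoc, Kinv_mul_K, mul_one]

lemma K_mul_F : gK * gF = (-1 : ℂ) • (gF * gK) := by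
  have h : gK * gF * gKi = (-1 : ℂ) • gF := by
    have h := RingQuot.mkAlgHom_rel ℂ QRel.KFKi
    rwa [← neg_one_smul ℂ ιF, map_smul, map_mul, map_mul] at h
  rw [← smul_mul_assoc, ← h, mul_assoc, Kinv_mul_K, mul_one]

lemma Kinv_eq_K_pow : gKi = gK ^ 3 := by
  have h : gK ^ 4 = 1 := by simpa [gK] using RingQuot.mkAlgHom_rel ℂ QRel.K4
  rw [← mul_one gKi, ← h, pow_succ', ← mul_assoc, Kinv_mul_K, one_mul]

lemma isUnit_K : IsUnit gK := ⟨⟨gK, gKi, K_mul_Kinv, Kinv_mul_K⟩, rfl⟩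

lemma adjoin_generators : Algebra.adjoin ℂ {gE, gF, gK} = ⊤ := by
  rw [← (AlgHom.range_eq_top _).mpr (RingQuot.mkAlgHom_surjective ℂ QRel), ← Algebra.map_top,
    ← FreeAlgebra.adjoin_range_ι, AlgHom.map_adjoin]
  refine le_antisymm (Algebra.adjoin_mono ?_) (Algebra.adjoin_le ?_)
  · rintro _ (rfl | rfl | rfl)
    exacts [⟨_, ⟨.E, rfl⟩, rfl⟩, ⟨_, ⟨.F, rfl⟩, rfl⟩, ⟨_, ⟨.K, rfl⟩, rfl⟩]
  · have hE : gE ∈ Algebra.adjoin ℂ {gE, gF, gK} := Algebra.subset_adjoin (by simp)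
    have hF : gF ∈ Algebra.adjoin ℂ {gE, gF, gK} := Algebra.subset_adjoin (by simp)
    have hK : gK ∈ Algebra.adjoin ℂ {gE, gF, gK} := Algebra.subset_adjoin (by simp)
    have hKinv : gKi ∈ Algebra.adjoin ℂ {gE, gF, gK} := Kinv_eq_K_pow ▸ pow_mem hK 3
    rintro _ ⟨_, ⟨_ | _ | _ | _, rfl⟩, rfl⟩ <;> assumption

lemma algHom_ext {R : Type*} [Ring R] [Algebra ℂ R] {f g : Q →ₐ[ℂ] R} (hE : f gE = g gE)
    (hF : f gF = g gF) (hK : f gK = g gK) : f = g :=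
  AlgHom.ext_of_adjoin_eq_top adjoin_generators (by simp [Set.EqOn, hE, hF, hK])

@[elab_as_elim]
lemma induction {p : Q → Prop} (hE : p gE) (hF : p gF) (hK : p gK)
    (algebraMap : ∀ r, p (algebraMap ℂ Q r)) (add : ∀ a b, p a → p b → p (a + b))
    (mul : ∀ a b, p a → p b → p (a * b)) (a : Q) : p a := by
  have ha : a ∈ Algebra.adjoin ℂ {gE, gF, gK} := adjoin_generators ▸ Algebra.mem_top
  induction ha using Algebra.adjoin_induction with
  | mem x hx => rcases hx with rfl | rfl | rfl <;> assumption
  | algebraMap r => exact algebraMap r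
  | add x y _ _ hx hy => exact add x y hx hy
  | mul x y _ _ hx hy => exact mul x y hx hy

/-- The comultiplication of `Q`, characterised by its values on the generators. -/
structure IsComul (Δ : Q →ₐ[ℂ] TP2 ℂ Q) : Prop where
  E : Δ gE = 1 ⊗ₜ[ℂ] gE + gE ⊗ₜ[ℂ] gK
  F : Δ gF = gKi ⊗ₜ[ℂ] gF + gF ⊗ₜ[ℂ] 1
  K : Δ gK = gK ⊗ₜ[ℂ] gK

/-- The counit of `Q`, characterised by its values on the generators. -/
structure IsCounit (ε : Q →ₐ[ℂ] ℂ) : Prop where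
  E : ε gE = 0
  F : ε gF = 0
  K : ε gK = 1

/-- The sign character of `Q`, on which `K` acts by `-1`. -/
def signChar : Q →ₐ[ℂ] ℂ :=
  RingQuot.liftAlgHom ℂ (s := QRel) ⟨FreeAlgebra.lift ℂ fun
    | .E => 0
    | .F => 0
    | .K => -1
    | .Kinv => -1, by
    rintro _ _ ⟨⟩ <;> norm_num [ιE, ιF, ιK, ιKi]⟩

@[simp] lemma signChar_E : signChar gE = 0 := by simp [signChar, gE, ιE]

@[simp] lemma signChar_F : signChar gF = 0 := by simp [signChar, gF, ιF]

@[simp] lemma signChar_K : signChar gK = -1 := by simp [signChar, gK, ιK]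

@[simp] lemma signChar_Kinv : signChar gKi = -1 := by simp [signChar, gKi, ιKi]

section SignCharacter

variable {Δ : Q →ₐ[ℂ] TP2 ℂ Q} {ε : Q →ₐ[ℂ] ℂ}

lemma rightTranslate_comp_rightTranslate (hΔ : IsComul Δ) :
    (rightTranslate Δ signChar).comp (rightTranslate Δ signChar) = AlgHom.id ℂ Q := by
  apply algHom_ext <;> simp [rightTranslate_apply, hΔ.E, hΔ.F, hΔ.K, smul_smul]

lemma signChar_comp_rightTranslate (hΔ : IsComul Δ) (hε : IsCounit ε) :
    signChar.comp (rightTranslate Δ signChar) = ε := by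
  apply algHom_ext <;>
    simp [rightTranslate_apply, hΔ.E, hΔ.F, hΔ.K, hε.E, hε.F, hε.K]

lemma semiconjBy_K (hΔ : IsComul Δ) (a : Q) :
    SemiconjBy gK (rightTranslate Δ signChar a) (leftTranslate Δ signChar a) := by
  induction a using Q.induction with
  | hE => simp [SemiconjBy, rightTranslate_apply, leftTranslate_apply, hΔ.E, K_mul_E, smul_smul]
  | hF => simp [SemiconjBy, rightTranslate_apply, leftTranslate_apply, hΔ.F, K_mul_F]
  | hK => simp [SemiconjBy, rightTranslate_apply, leftTranslate_apply, hΔ.K]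
  | algebraMap r =>
    simp only [AlgHom.commutes]
    exact Algebra.commute_algebraMap_right r gK
  | add a b ha hb => simpa only [map_add] using ha.add_right hb
  | mul a b ha hb => simpa only [map_mul] using ha.mul_right hb

lemma isCentralInvolution_signChar (hΔ : IsComul Δ) (hε : IsCounit ε) :
    IsCentralInvolution Δ ε signChar gK where
  isUnit := isUnit_K
  comul := hΔ.K
  comp_rightTranslate := signChar_comp_rightTranslate hΔ hε
  rightTranslate_surjective :=
    Function.RightInverse.surjective (DFunLike.congr_fun (rightTranslate_comp_rightTranslate hΔ))
  semiconjBy := semiconjBy_K hΔ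

end SignCharacter

/-- The two-dimensional simple module of `Q` on which `K` acts with eigenvalues `±i`. -/
def planeRep : Q →ₐ[ℂ] Matrix (Fin 2) (Fin 2) ℂ :=
  RingQuot.liftAlgHom ℂ (s := QRel) ⟨FreeAlgebra.lift ℂ fun
    | .E => !![0, 1; 0, 0]
    | .F => !![0, 0; 1, 0]
    | .K => !![Complex.I, 0; 0, -Complex.I]
    | .Kinv => !![-Complex.I, 0; 0, Complex.I], by
    rintro _ _ ⟨⟩ <;> ext i j <;> fin_cases i <;> fin_cases j <;>
      simp [ιE, ιF, ιK, ιKi, Matrix.mul_apply, pow_succ, Fin.sum_univ_two] <;>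
      ring_nf <;> norm_num⟩

@[simp] lemma planeRep_E : planeRep gE = !![0, 1; 0, 0] := by simp [planeRep, gE, ιE]

@[simp] lemma planeRep_F : planeRep gF = !![0, 0; 1, 0] := by simp [planeRep, gF, ιF]

@[simp] lemma planeRep_K : planeRep gK = !![Complex.I, 0; 0, -Complex.I] := by
  simp [planeRep, gK, ιK]

@[simp] lemma planeRep_Kinv : planeRep gKi = !![-Complex.I, 0; 0, Complex.I] := by
  simp [planeRep, gKi, ιKi]

lemma exists_planeRep_eq_algebraMap {c : Q} (hc : c ∈ Subalgebra.center ℂ Q) :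
    ∃ s : ℂ, planeRep c = algebraMap ℂ _ s := by
  have hcomm (a : Q) : Commute (planeRep a) (planeRep c) :=
    Commute.map (Subalgebra.mem_center_iff.mp hc a) planeRep
  have hE : planeRep gE = Matrix.single 0 1 1 := by
    ext i j; fin_cases i <;> fin_cases j <;> simp
  have hF : planeRep gF = Matrix.single 1 0 1 := by
    ext i j; fin_cases i <;> fin_cases j <;> simp
  obtain ⟨s, hs⟩ := Matrix.mem_range_scalar_of_commute_single (M := planeRep c) fun i j hij => by
    fin_cases i <;> fin_cases j
    exacts [absurd rfl hij, hE ▸ hcomm gE, hF ▸ hcomm gF, absurd rfl hij]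
  exact ⟨s, hs.symm⟩

/-- The invariant vector of the tensor square of the two-dimensional module. -/
def singlet : Fin 2 × Fin 2 → ℂ
  | (0, 1) => Complex.I
  | (1, 0) => -1
  | _ => 0

lemma singlet_ne_zero : singlet ≠ 0 := fun h => by simpa [singlet] using congrFun h (1, 0)

open scoped Matrix in
lemma tensorSquare_comul_mulVec_singlet {Δ : Q →ₐ[ℂ] TP2 ℂ Q} {ε : Q →ₐ[ℂ] ℂ} (hΔ : IsComul Δ)
    (hε : IsCounit ε) (a : Q) : tensorSquare planeRep (Δ a) *ᵥ singlet = ε a • singlet := by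
  induction a using Q.induction with
  | hE =>
    rw [hΔ.E, hε.E, map_add, tensorSquare_tmul, tensorSquare_tmul]
    ext ⟨i, j⟩
    fin_cases i <;> fin_cases j <;>
      simp [Matrix.mulVec, dotProduct, Fintype.sum_prod_type, singlet]
  | hF =>
    rw [hΔ.F, hε.F, map_add, tensorSquare_tmul, tensorSquare_tmul]
    ext ⟨i, j⟩
    fin_cases i <;> fin_cases j <;>
      simp [Matrix.mulVec, dotProduct, Fintype.sum_prod_type, singlet]
  | hK =>
    rw [hΔ.K, hε.K, tensorSquare_tmul]
    ext ⟨i, j⟩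
    fin_cases i <;> fin_cases j <;>
      simp [Matrix.mulVec, dotProduct, Fintype.sum_prod_type, singlet]
  | algebraMap r =>
    simp [Algebra.algebraMap_eq_smul_one, Matrix.smul_mulVec]
  | add a b ha hb => simp only [map_add, Matrix.add_mulVec, ha, hb, add_smul]
  | mul a b ha hb =>
    simp only [map_mul, ← Matrix.mulVec_mulVec, Matrix.mulVec_smul, ha, hb, smul_smul, mul_comm]

lemma e0_add_e1 : e0 + e1 = 1 := by
  rw [e0, e1, ← smul_add, add_add_sub_cancel, ← two_smul ℂ (1 : Q), inv_smul_smul₀ two_ne_zero]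

lemma commute_K_e1 : Commute gK e1 :=
  ((Commute.one_right gK).sub_right (Commute.self_pow gK 2)).smul_right _

@[simp] lemma signChar_e1 : signChar e1 = 0 := by simp [e1]

@[simp] lemma signChar_e0 : signChar e0 = 1 := by norm_num [e0]

lemma planeRep_e1 : planeRep e1 = 1 := by
  ext i j
  fin_cases i <;> fin_cases j <;> norm_num [e1, pow_two]

lemma e0_tmul_add_e1_tmul :
    e0 ⊗ₜ[ℂ] e0 + e1 ⊗ₜ[ℂ] e0 + e0 ⊗ₜ[ℂ] e1 + e1 ⊗ₜ[ℂ] e1 = 1 := by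
  rw [← add_tmul, add_assoc, ← add_tmul, ← tmul_add, e0_add_e1, Algebra.TensorProduct.one_def]

lemma evalLeft_Phi (β : ℂ) : evalLeft signChar (Phi β) = 1 := by
  have h : evalLeft signChar Phi010 = 1 := by
    simp [Phi010, t3, eFK, eEFK, Algebra.TensorProduct.one_def]
  simp [Phi, t3, h, e0_tmul_add_e1_tmul]

lemma evalLast_Phi (β : ℂ) : evalLast signChar (Phi β) = 1 := by
  have h : evalLast signChar Phi010 = 1 := by
    simp [Phi010, t3, eEK, eEFK, Algebra.TensorProduct.one_def]
  simp [Phi, t3, h, e0_tmul_add_e1_tmul]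

lemma evalMiddle_Phi (β : ℂ) :
    evalMiddle signChar (Phi β) = 1 - (2 : ℂ) • (e1 ⊗ₜ[ℂ] e1) := by
  have h : evalMiddle signChar Phi101 = -1 := by
    simp [Phi101, t3, eFK, eEFK, eEF, eEK, Algebra.TensorProduct.one_def]
  rw [← e0_tmul_add_e1_tmul, two_smul]
  simp [Phi, t3, h, sub_eq_add_neg]

lemma commute_K_evalMiddle {Φ : TP3 ℂ Q}
    (hΦ : evalMiddle signChar Φ = 1 - (2 : ℂ) • (e1 ⊗ₜ[ℂ] e1)) :
    Commute (gK ⊗ₜ[ℂ] 1) (evalMiddle signChar Φ) := by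
  have h : Commute (gK ⊗ₜ[ℂ] 1) (e1 ⊗ₜ[ℂ] e1) := by
    simp [Commute, SemiconjBy, commute_K_e1.eq]
  rw [hΦ]
  exact Commute.sub_right (R := TP2 ℂ Q) (.one_right _) (h.smul_right 2)

lemma tensorSquare_planeRep_evalMiddle {Φ : TP3 ℂ Q}
    (hΦ : evalMiddle signChar Φ = 1 - (2 : ℂ) • (e1 ⊗ₜ[ℂ] e1)) :
    tensorSquare planeRep (evalMiddle signChar Φ) = -1 := by
  rw [hΦ, map_sub, map_smul, map_one, tensorSquare_tmul, planeRep_e1, Matrix.kronecker,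
    Matrix.one_kronecker_one, two_smul, sub_add_cancel_left]

end Q

theorem statement11_general (Φ : TP3 ℂ Q) (hΦ₁ : evalLeft Q.signChar Φ = 1)
    (hΦ₂ : evalMiddle Q.signChar Φ = 1 - (2 : ℂ) • (e1 ⊗ₜ[ℂ] e1))
    (hΦ₃ : evalLast Q.signChar Φ = 1)
    (Δ : Q →ₐ[ℂ] TP2 ℂ Q)
    (hΔE : Δ gE = (1 : Q) ⊗ₜ[ℂ] gE + gE ⊗ₜ[ℂ] gK)
    (hΔF : Δ gF = gKi ⊗ₜ[ℂ] gF + gF ⊗ₜ[ℂ] (1 : Q))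
    (hΔK : Δ gK = gK ⊗ₜ[ℂ] gK)
    (ce : Q →ₐ[ℂ] ℂ) (hceE : ce gE = 0) (hceF : ce gF = 0) (hceK : ce gK = 1) :
    ¬ ∃ Ftw : TP2 ℂ Q, IsUnit Ftw ∧
      cuL ce Ftw = 1 ∧ cuR ce Ftw = 1 ∧
      (∀ a : Q, Ftw * Δ a * Ring.inverse Ftw = Δ a) ∧
      Φ = emb12 ℂ Q Ftw * copL Δ Ftw * Ring.inverse (copR Δ Ftw) *
        Ring.inverse ((1 : Q) ⊗ₜ[ℂ] Ftw) := by
  rintro ⟨F, hF, hεF, hFε, hFΔ, hΦ⟩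
  have hΔ : Q.IsComul Δ := ⟨hΔE, hΔF, hΔK⟩
  have hε : Q.IsCounit ce := ⟨hceE, hceF, hceK⟩
  have htwist : IsTrivializingTwist Δ ce Φ F := .of_inverse hF hεF hFε hFΔ hΦ
  exact (Q.isCentralInvolution_signChar hΔ hε).not_isTrivializingTwist
    hΦ₁ hΦ₃ (Q.commute_K_evalMiddle hΦ₂) (fun _ => Q.exists_planeRep_eq_algebraMap)
    Q.singlet_ne_zero (Q.tensorSquare_comul_mulVec_singlet hΔ hε)
    (Q.tensorSquare_planeRep_evalMiddle hΦ₂) htwist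

/-- the coassociator `Φ` is not the coboundary of any Drinfeld twist
of the Hopf algebra `Q`; i.e. `(Q, Φ)` is not a Drinfeld twist of `Q`. -/
theorem statement11 (β : ℂ) (hβ : β ^ 4 = -1)
    (Δ : Q →ₐ[ℂ] TP2 ℂ Q)
    (hΔE : Δ gE = (1:Q) ⊗ₜ[ℂ] gE + gE ⊗ₜ[ℂ] gK)
    (hΔF : Δ gF = gKi ⊗ₜ[ℂ] gF + gF ⊗ₜ[ℂ] (1:Q))
    (hΔK : Δ gK = gK ⊗ₜ[ℂ] gK)
    (ce : Q →ₐ[ℂ] ℂ) (hceE : ce gE = 0) (hceF : ce gF = 0) (hceK : ce gK = 1) :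
    ¬ ∃ Ftw : TP2 ℂ Q, IsUnit Ftw ∧
      cuL ce Ftw = 1 ∧ cuR ce Ftw = 1 ∧
      (∀ a : Q, Ftw * Δ a * Ring.inverse Ftw = Δ a) ∧
      Phi β = emb12 ℂ Q Ftw * copL Δ Ftw * Ring.inverse (copR Δ Ftw) *
        Ring.inverse ((1:Q) ⊗ₜ[ℂ] Ftw) := by
  exact statement11_general (Phi β) (Q.evalLeft_Phi β) (Q.evalMiddle_Phi β) (Q.evalLast_Phi β)
    Δ hΔE hΔF hΔK ce hceE hceF hceK
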